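/- arXiv:2411.16620 — 3 statements merged into one kernel-verified Lean document; each statement's English description precedes it below -/
import Mathlib

section
/- Let n ≥ 2. For all T, T' in the unitary group U(n−1), all b, b' ∈ ℂ^{n−1} and all c, c' ∈ ℝ, the matrix product M(T,b,c) · M(T',b',c') equals M(TT', b + Tb', c + c' + Im⟨b, Tb'⟩), where ⟨x,y⟩ = ∑ᵢ xᵢ · conj(yᵢ). -/
open Matrix Complex

/-- The parabolic matrix `M(T,b,c)` in block form (blocks of sizes 1, 1, n-1):
`[[1, -‖b‖²/2 + i c, -b* T], [0, 1, 0], [0, b, T]]`. -/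
noncomputable def parabolicMatrix (n : ℕ) (T : Matrix (Fin (n - 1)) (Fin (n - 1)) ℂ)
    (b : Fin (n - 1) → ℂ) (c : ℝ) :
    Matrix (Fin 1 ⊕ (Fin 1 ⊕ Fin (n - 1))) (Fin 1 ⊕ (Fin 1 ⊕ Fin (n - 1))) ℂ :=
  Matrix.of fun i j =>
    match i, j with
    | Sum.inl _, Sum.inl _ => 1
    | Sum.inl _, Sum.inr (Sum.inl _) =>
        -(∑ k, (Complex.normSq (b k) : ℂ)) / 2 + Complex.I * (c : ℂ)
    | Sum.inl _, Sum.inr (Sum.inr j) => -(∑ l, (starRingEnd ℂ) (b l) * T l j)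
    | Sum.inr (Sum.inl _), Sum.inl _ => 0
    | Sum.inr (Sum.inl _), Sum.inr (Sum.inl _) => 1
    | Sum.inr (Sum.inl _), Sum.inr (Sum.inr _) => 0
    | Sum.inr (Sum.inr _), Sum.inl _ => 0
    | Sum.inr (Sum.inr i), Sum.inr (Sum.inl _) => b i
    | Sum.inr (Sum.inr i), Sum.inr (Sum.inr j) => T i j

/-!
Block multiplication reduces the claim to an identity for the corner entry and one for the row
block. Since `T* T = 1`, we have `(Tb')* T = b'*` and `‖Tb'‖ = ‖b'‖`. The first settles the row.
For the corner, expanding `‖b + Tb'‖²` produces the real part of `⟨b, Tb'⟩` where block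
multiplication produces the whole term `b* T b'`; the imaginary part left over goes into `c`.
-/

section BorderedMatrix

variable {R ι : Type*}

/-- The block matrix `[[1, z, r], [0, 1, 0], [0, b, T]]`: the shape of `parabolicMatrix`, with
independent entries. -/
def borderedMatrix [Zero R] [One R] (z : R) (r b : ι → R) (T : Matrix ι ι R) :
    Matrix (Fin 1 ⊕ (Fin 1 ⊕ ι)) (Fin 1 ⊕ (Fin 1 ⊕ ι)) R :=
  fromBlocks 1 (fromCols (of fun _ _ => z) (replicateRow (Fin 1) r))
    0 (fromBlocks 1 0 (replicateCol (Fin 1) b) T)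

lemma borderedMatrix_mul [NonAssocSemiring R] [Fintype ι] (z z' : R) (r r' b b' : ι → R)
    (T T' : Matrix ι ι R) :
    borderedMatrix z r b T * borderedMatrix z' r' b' T' =
      borderedMatrix (z' + z + r ⬝ᵥ b') (r' + r ᵥ* T') (b + T *ᵥ b') (T * T') := by
  ext (i | i | i) (j | j | j) <;>
    simp [borderedMatrix, mul_apply, dotProduct, mulVec, vecMul, one_apply, add_assoc,
      eq_iff_true_of_subsingleton]

end BorderedMatrix

lemma parabolicMatrix_eq_borderedMatrix (n : ℕ) (T : Matrix (Fin (n - 1)) (Fin (n - 1)) ℂ)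
    (b : Fin (n - 1) → ℂ) (c : ℝ) :
    parabolicMatrix n T b c =
      borderedMatrix (-(star b ⬝ᵥ b) / 2 + I * c) (-(star b ᵥ* T)) b T := by
  ext (i | i | i) (j | j | j) <;>
    simp [parabolicMatrix, borderedMatrix, dotProduct, vecMul, normSq_eq_conj_mul_self, one_apply,
      eq_iff_true_of_subsingleton]

section Isometry

variable {R m n : Type*} [Semiring R] [StarRing R] [Fintype m] [Fintype n] [DecidableEq n]
  {T : Matrix m n R}

lemma star_mulVec_vecMul_of_conjTranspose_mul_self (hT : Tᴴ * T = 1) (x : n → R) :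
    star (T *ᵥ x) ᵥ* T = star x := by
  rw [star_mulVec, vecMul_vecMul, hT, vecMul_one]

lemma star_mulVec_dotProduct_mulVec_of_conjTranspose_mul_self (hT : Tᴴ * T = 1) (x : n → R) :
    star (T *ᵥ x) ⬝ᵥ (T *ᵥ x) = star x ⬝ᵥ x := by
  rw [dotProduct_mulVec, star_mulVec_vecMul_of_conjTranspose_mul_self hT]

end Isometry

lemma star_add_dotProduct_add {ι : Type*} [Fintype ι] (x y : ι → ℂ) :
    star (x + y) ⬝ᵥ (x + y) =
      star x ⬝ᵥ x + star y ⬝ᵥ y + 2 * (star x ⬝ᵥ y + I * (x ⬝ᵥ star y).im) := by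
  have conj_eq : star x ⬝ᵥ y = star (x ⬝ᵥ star y) := by
    rw [star_dotProduct, dotProduct_comm]
  have cross_terms : star x ⬝ᵥ y + star y ⬝ᵥ x = 2 * (star x ⬝ᵥ y + I * (x ⬝ᵥ star y).im) := by
    rw [dotProduct_comm (star y), conj_eq, ← starRingEnd_apply]
    have sub_conj_eq := sub_conj (x ⬝ᵥ star y)
    push_cast at sub_conj_eq
    linear_combination sub_conj_eq
  rw [← cross_terms, star_add, add_dotProduct, dotProduct_add, dotProduct_add]
  ring

theorem parabolicMatrix_mul_general (n : ℕ) {T : Matrix (Fin (n - 1)) (Fin (n - 1)) ℂ}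
    (hT : Tᴴ * T = 1) (T' : Matrix (Fin (n - 1)) (Fin (n - 1)) ℂ)
    (b b' : Fin (n - 1) → ℂ) (c c' : ℝ) :
    parabolicMatrix n T b c * parabolicMatrix n T' b' c' =
      parabolicMatrix n (T * T') (b + T *ᵥ b') (c + c' + (b ⬝ᵥ star (T *ᵥ b')).im) := by
  simp only [parabolicMatrix_eq_borderedMatrix, borderedMatrix_mul]
  congr 1
  · rw [star_add_dotProduct_add, star_mulVec_dotProduct_mulVec_of_conjTranspose_mul_self hT,
      neg_dotProduct, ← dotProduct_mulVec]
    push_cast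
    ring
  · rw [star_add, ← vecMul_vecMul, add_vecMul, star_mulVec_vecMul_of_conjTranspose_mul_self hT,
      add_vecMul, neg_vecMul, neg_add_rev]

/-- The product `M(T,b,c) · M(T',b',c')` equals
`M(TT', b + Tb', c + c' + Im⟨b, Tb'⟩)` where `⟨x,y⟩ = ∑ i, x i * conj (y i)`. -/
theorem parabolicMatrix_mul (n : ℕ) (hn : 2 ≤ n)
    (T T' : Matrix.unitaryGroup (Fin (n - 1)) ℂ)
    (b b' : Fin (n - 1) → ℂ) (c c' : ℝ) :
    parabolicMatrix n (T : Matrix (Fin (n - 1)) (Fin (n - 1)) ℂ) b c *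
        parabolicMatrix n (T' : Matrix (Fin (n - 1)) (Fin (n - 1)) ℂ) b' c' =
      parabolicMatrix n
        ((T : Matrix (Fin (n - 1)) (Fin (n - 1)) ℂ) * (T' : Matrix (Fin (n - 1)) (Fin (n - 1)) ℂ))
        (b + (T : Matrix (Fin (n - 1)) (Fin (n - 1)) ℂ).mulVec b')
        (c + c' +
          (∑ k, b k * (starRingEnd ℂ)
            ((T : Matrix (Fin (n - 1)) (Fin (n - 1)) ℂ).mulVec b' k)).im) := by
  exact parabolicMatrix_mul_general n (mem_unitaryGroup_iff'.mp T.2) T' b b' c c'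
end

section
/- Let m, k ≥ 1, let π₁,…,π_k, σ₁,…,σ_k be unitary ℂ-linear automorphisms of ℂ^m that pairwise commute, and let b₁,…,b_k, c₁,…,c_k ∈ ℂ^m. Define affine bijections xᵢ(z) = πᵢ z + bᵢ and yᵢ(z) = σᵢ z + cᵢ of ℂ^m, and let z := [x₁,y₁] ∘ ⋯ ∘ [x_k,y_k] be the product of the commutators [xᵢ,yᵢ] = xᵢ ∘ yᵢ ∘ xᵢ⁻¹ ∘ yᵢ⁻¹. If z commutes (under composition) with each xᵢ and each yᵢ, then z is the identity map. -/
open Function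

/-!
If `t` is fixed by the linear part `A` of an affine isometry `g`, then
`⟪t, A v⟫ = ⟪A t, A v⟫ = ⟪t, v⟫`, so `⟪t, g p - p⟫` does not depend on `p`. On a group of affine
isometries whose linear parts all fix `t`, the map `g ↦ ⟪t, g p - p⟫` is therefore a homomorphism
to an abelian group, and it kills commutators. A translation by `t` that commutes with the group
forces the linear parts to fix `t`; if it is also a product of commutators, then `⟪t, t⟫ = 0`.
-/

section AffineIsometryGroup

variable {𝕜 E P : Type*} [NormedField 𝕜] [SeminormedAddCommGroup E] [NormedSpace 𝕜 E]
  [PseudoMetricSpace P] [NormedAddTorsor E P]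

variable (𝕜 P) in
/-- The linear part of an affine isometry, as a group homomorphism. -/
@[simps]
def linearIsometryHom : (P ≃ᵃⁱ[𝕜] P) →* (E ≃ₗᵢ[𝕜] E) where
  toFun g := g.linearIsometryEquiv
  map_one' := rfl
  map_mul' _ _ := rfl

theorem coe_list_prod_eq_foldr_comp (l : List (P ≃ᵃⁱ[𝕜] P)) :
    ⇑l.prod = (l.map (⇑)).foldr (· ∘ ·) id := by
  induction l with
  | nil => rfl
  | cons g l ih =>
    rw [List.prod_cons, AffineIsometryEquiv.coe_mul, ih, List.map_cons, List.foldr_cons]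

theorem map_vsub_eq_map_vsub_of_linear_eq_one {z : P ≃ᵃⁱ[𝕜] P}
    (hz : z.linearIsometryEquiv = 1) (p q : P) : z p -ᵥ p = z q -ᵥ q := by
  rw [← sub_eq_zero, vsub_sub_vsub_comm, ← z.map_vsub, hz, LinearIsometryEquiv.coe_one, id,
    sub_self]

theorem linear_map_vsub_of_commute {z g : P ≃ᵃⁱ[𝕜] P} (hz : z.linearIsometryEquiv = 1)
    (hzg : Commute z g) (p : P) : g.linearIsometryEquiv (z p -ᵥ p) = z p -ᵥ p := calc
  g.linearIsometryEquiv (z p -ᵥ p) = g (z p) -ᵥ g p := g.map_vsub _ _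
  _ = z (g p) -ᵥ g p := congrArg (· -ᵥ g p) (DFunLike.congr_fun hzg.eq.symm p)
  _ = z p -ᵥ p := map_vsub_eq_map_vsub_of_linear_eq_one hz _ _

end AffineIsometryGroup

section InnerDisplacement

variable {𝕜 E P : Type*} [RCLike 𝕜] [SeminormedAddCommGroup E] [InnerProductSpace 𝕜 E]
  [PseudoMetricSpace P] [NormedAddTorsor E P]

theorem inner_map_vsub_eq_of_linear_fixed {t : E} (g : P ≃ᵃⁱ[𝕜] P)
    (ht : g.linearIsometryEquiv t = t) (p q : P) :
    inner 𝕜 t (g p -ᵥ p) = inner 𝕜 t (g q -ᵥ q) := by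
  have hpq : inner 𝕜 t (g p -ᵥ g q) = inner 𝕜 t (p -ᵥ q) := by
    rw [← g.map_vsub, ← g.linearIsometryEquiv.inner_map_map t (p -ᵥ q), ht]
  rw [← sub_eq_zero, ← inner_sub_right, vsub_sub_vsub_comm, inner_sub_right, hpq, sub_self]

/-- The component along `t` of the displacement of a base point `p`, as a homomorphism on a group
acting by affine isometries whose linear parts fix `t`. The codomain is the additive group of `𝕜`,
written multiplicatively so that the general facts on commutator subgroups apply. -/
def innerDisplacement {G : Type*} [Group G] (ρ : G →* P ≃ᵃⁱ[𝕜] P) (t : E)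
    (ht : ∀ g, (ρ g).linearIsometryEquiv t = t) (p : P) : G →* Multiplicative 𝕜 where
  toFun g := .ofAdd (inner 𝕜 t (ρ g p -ᵥ p))
  map_one' := by simp
  map_mul' g h := by
    rw [← ofAdd_add, inner_map_vsub_eq_of_linear_fixed (ρ g) (ht g) p (ρ h p), ← inner_add_right,
      vsub_add_vsub_cancel, map_mul, AffineIsometryEquiv.coe_mul, comp_apply]

theorem inner_map_vsub_eq_zero_of_mem_commutator {H : Subgroup (P ≃ᵃⁱ[𝕜] P)} {t : E}
    (ht : ∀ g ∈ H, g.linearIsometryEquiv t = t) {z : P ≃ᵃⁱ[𝕜] P} (hz : z ∈ ⁅H, H⁆) (p : P) :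
    inner 𝕜 t (z p -ᵥ p) = 0 := by
  rw [← Subgroup.map_subtype_commutator] at hz
  obtain ⟨z, hz, rfl⟩ := hz
  exact Abelianization.commutator_subset_ker
    (innerDisplacement H.subtype t (fun g => ht g g.2) p) hz

end InnerDisplacement

section ProductsOfCommutators

open scoped commutatorElement

variable {𝕜 E P : Type*} [RCLike 𝕜] [NormedAddCommGroup E] [InnerProductSpace 𝕜 E]
  [PseudoMetricSpace P] [NormedAddTorsor E P]

theorem eq_one_of_mem_commutator_of_mem_centralizer {H : Subgroup (P ≃ᵃⁱ[𝕜] P)}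
    {z : P ≃ᵃⁱ[𝕜] P} (hz : z ∈ ⁅H, H⁆) (hzH : z ∈ Subgroup.centralizer (H : Set (P ≃ᵃⁱ[𝕜] P)))
    (hlin : z.linearIsometryEquiv = 1) : z = 1 := by
  ext p
  have hfixed : ∀ g ∈ H, g.linearIsometryEquiv (z p -ᵥ p) = z p -ᵥ p := fun g hg =>
    linear_map_vsub_of_commute hlin (Subgroup.mem_centralizer_iff.1 hzH g hg).symm p
  have horth : inner 𝕜 (z p -ᵥ p) (z p -ᵥ p) = 0 :=
    inner_map_vsub_eq_zero_of_mem_commutator hfixed hz p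
  exact vsub_eq_zero_iff_eq.1 (inner_self_eq_zero.1 horth)

theorem prod_commutators_eq_one_of_commute {k : ℕ} (x y : Fin k → P ≃ᵃⁱ[𝕜] P)
    (hlin : (List.ofFn fun i =>
      ⁅(x i).linearIsometryEquiv, (y i).linearIsometryEquiv⁆).prod = 1)
    (hx : ∀ i, Commute (List.ofFn fun i => ⁅x i, y i⁆).prod (x i))
    (hy : ∀ i, Commute (List.ofFn fun i => ⁅x i, y i⁆).prod (y i)) :
    (List.ofFn fun i => ⁅x i, y i⁆).prod = 1 := by
  let H := Subgroup.closure (Set.range x ∪ Set.range y)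
  have hxH : ∀ i, x i ∈ H := fun i => Subgroup.subset_closure (.inl ⟨i, rfl⟩)
  have hyH : ∀ i, y i ∈ H := fun i => Subgroup.subset_closure (.inr ⟨i, rfl⟩)
  apply eq_one_of_mem_commutator_of_mem_centralizer (H := H)
  · exact list_prod_mem <| List.forall_mem_ofFn_iff.2 fun i =>
      Subgroup.commutator_mem_commutator (hxH i) (hyH i)
  · rw [Subgroup.centralizer_closure, Subgroup.mem_centralizer_iff]
    rintro _ (⟨i, rfl⟩ | ⟨i, rfl⟩)
    exacts [(hx i).eq.symm, (hy i).eq.symm]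
  · simpa only [List.map_ofFn, comp_def, map_commutatorElement, linearIsometryHom_apply, hlin]
      using map_list_prod (linearIsometryHom 𝕜 P) (List.ofFn fun i => ⁅x i, y i⁆)

theorem product_of_commutators_central_implies_id_general
    {k : ℕ} (π σ : Fin k → E ≃ₗᵢ[𝕜] E) (b c : Fin k → E)
    (hπσ : (List.ofFn fun i => ⁅π i, σ i⁆).prod = 1)
    (x y xinv yinv : Fin k → E → E)
    (hx : ∀ i v, x i v = π i v + b i)
    (hy : ∀ i v, y i v = σ i v + c i)
    (hxinv : ∀ i v, xinv i v = (π i).symm (v - b i))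
    (hyinv : ∀ i v, yinv i v = (σ i).symm (v - c i))
    (z : E → E)
    (hz : z = (List.ofFn (fun i => x i ∘ y i ∘ xinv i ∘ yinv i)).foldr (· ∘ ·) id)
    (hcentral : ∀ i, z ∘ x i = x i ∘ z ∧ z ∘ y i = y i ∘ z) :
    z = id := by
  let X i : E ≃ᵃⁱ[𝕜] E := .mk' (x i) (π i) 0 (by simp [hx])
  let Y i : E ≃ᵃⁱ[𝕜] E := .mk' (y i) (σ i) 0 (by simp [hy])
  have hXinv i : ⇑(X i)⁻¹ = xinv i := funext fun v =>
    (X i).symm_apply_eq.2 <| by simp [X, hx, hxinv]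
  have hYinv i : ⇑(Y i)⁻¹ = yinv i := funext fun v =>
    (Y i).symm_apply_eq.2 <| by simp [Y, hy, hyinv]
  have hXY i : ⇑⁅X i, Y i⁆ = x i ∘ y i ∘ xinv i ∘ yinv i := by
    rw [← hXinv, ← hYinv]
    rfl
  have hZ : ⇑(List.ofFn fun i => ⁅X i, Y i⁆).prod = z := by
    rw [hz, coe_list_prod_eq_foldr_comp, List.map_ofFn, ← funext hXY, comp_def]
  have hone : (List.ofFn fun i => ⁅X i, Y i⁆).prod = 1 := by
    refine prod_commutators_eq_one_of_commute X Y (by simpa [X, Y] using hπσ) ?_ ?_ <;> intro i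
    · exact DFunLike.coe_injective (by simpa [hZ, X] using (hcentral i).1)
    · exact DFunLike.coe_injective (by simpa [hZ, Y] using (hcentral i).2)
  rw [← hZ, hone, AffineIsometryEquiv.coe_one]

end ProductsOfCommutators

/-- If `z` is the product of commutators `[xᵢ, yᵢ]` of affine unitary bijections of `ℂ^m`
with pairwise commuting linear parts, and `z` commutes with each `xᵢ` and each `yᵢ`,
then `z` is the identity. -/
theorem product_of_commutators_central_implies_id
    (m k : ℕ) (hm : 1 ≤ m) (hk : 1 ≤ k)
    (π σ : Fin k → (EuclideanSpace ℂ (Fin m) ≃ₗᵢ[ℂ] EuclideanSpace ℂ (Fin m)))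
    (b c : Fin k → EuclideanSpace ℂ (Fin m))
    (hππ : ∀ i j v, π i (π j v) = π j (π i v))
    (hπσ : ∀ i j v, π i (σ j v) = σ j (π i v))
    (hσσ : ∀ i j v, σ i (σ j v) = σ j (σ i v))
    (x y xinv yinv : Fin k → EuclideanSpace ℂ (Fin m) → EuclideanSpace ℂ (Fin m))
    (hx : ∀ i v, x i v = π i v + b i)
    (hy : ∀ i v, y i v = σ i v + c i)
    (hxinv : ∀ i v, xinv i v = (π i).symm (v - b i))
    (hyinv : ∀ i v, yinv i v = (σ i).symm (v - c i))
    (z : EuclideanSpace ℂ (Fin m) → EuclideanSpace ℂ (Fin m))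
    (hz : z = (List.ofFn (fun i => x i ∘ y i ∘ xinv i ∘ yinv i)).foldr (· ∘ ·) id)
    (hcentral : ∀ i, z ∘ x i = x i ∘ z ∧ z ∘ y i = y i ∘ z) :
    z = id :=
  product_of_commutators_central_implies_id_general π σ b c
    (List.prod_eq_one <| List.forall_mem_ofFn_iff.2 fun i =>
      commutatorElement_eq_one_iff_mul_comm.2 (LinearIsometryEquiv.ext (hπσ i i)))
    x y xinv yinv hx hy hxinv hyinv z hz hcentral
end

section
/- Let E = ℂ^m with its standard Hermitian inner product, and let G be a nilpotent subgroup of the group of bijective isometries of E such that every g ∈ G is an affine unitary transformation, i.e. g(z) = T_g z + b_g for some unitary ℂ-linear automorphism T_g of E and some b_g ∈ E, and such that the linear parts pairwise commute: T_g T_h = T_h T_g for all g, h ∈ G. Then G is commutative. -/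
/-!
For every isometry `g`, the displacement `dist (g ^ n x) x` grows at most linearly in `n`, while for
a non-trivial translation it grows exactly linearly. If a commutator `c = ⁅g, h⁆` commutes with
`g` and `h`, then `c ^ (n * n) = ⁅g ^ n, h ^ n⁆`, so the displacement of `c ^ (n * n)` is only
`O(n)` and `c` cannot be a non-trivial translation. A non-abelian nilpotent group contains a
non-trivial central commutator; when the linear parts commute, every commutator is a translation.
-/

open scoped commutatorElement

section Group

variable {G : Type*} [Group G]

theorem commutatorElement_pow_left {g h : G} (hg : Commute g ⁅g, h⁆) (n : ℕ) :
    ⁅g ^ n, h⁆ = ⁅g, h⁆ ^ n := by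
  have hconj : SemiconjBy h g (⁅g, h⁆⁻¹ * g) := by
    rw [SemiconjBy, commutatorElement_def]
    group
  have hconj_pow : h * g ^ n = (⁅g, h⁆ ^ n)⁻¹ * g ^ n * h := by
    rw [← inv_pow, ← hg.symm.inv_left.mul_pow]
    exact hconj.pow_right n
  rw [commutatorElement_def, mul_inv_eq_iff_eq_mul, mul_inv_eq_iff_eq_mul, mul_assoc, hconj_pow]
  group

theorem commutatorElement_pow_right {g h : G} (hh : Commute h ⁅g, h⁆) (n : ℕ) :
    ⁅g, h ^ n⁆ = ⁅g, h⁆ ^ n := by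
  rw [← commutatorElement_inv] at hh
  rw [← commutatorElement_inv, commutatorElement_pow_left (Commute.inv_right_iff.mp hh),
    ← inv_pow, commutatorElement_inv]

theorem commutatorElement_pow_pow {g h : G} (hg : Commute g ⁅g, h⁆) (hh : Commute h ⁅g, h⁆)
    (m n : ℕ) : ⁅g ^ m, h ^ n⁆ = ⁅g, h⁆ ^ (m * n) := by
  have hleft := commutatorElement_pow_left hg m
  rw [commutatorElement_pow_right (hleft ▸ hh.pow_right m), hleft, pow_mul]

theorem exists_commutatorElement_mem_center_ne_one [Group.IsNilpotent G] {g h : G}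
    (hgh : ¬ Commute g h) : ∃ x y : G, ⁅x, y⁆ ∈ Subgroup.center G ∧ ⁅x, y⁆ ≠ 1 := by
  by_contra! htrivial
  have hle : Subgroup.upperCentralSeries G 2 ≤ Subgroup.upperCentralSeries G 1 := by
    intro x hx
    rw [Subgroup.mem_upperCentralSeries_succ_iff, Subgroup.upperCentralSeries_one] at hx
    rw [Subgroup.upperCentralSeries_one, Subgroup.mem_center_iff]
    exact fun y => (commutatorElement_eq_one_iff_mul_comm.mp (htrivial x y (hx y))).symm
  have hstable : Subgroup.upperCentralSeries G 1 = Subgroup.upperCentralSeries G 2 :=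
    (Subgroup.upperCentralSeries_mono G one_le_two).antisymm hle
  have hcenter : Subgroup.center G = ⊤ := by
    rw [← Subgroup.upperCentralSeries_one]
    exact Subgroup.upperCentralSeries.eq_top (by decide) hstable
  exact hgh (Subgroup.mem_center_iff.mp (hcenter ▸ Subgroup.mem_top h) g)

end Group

section Undistorted

variable {G : Type*} [Group G] {ℓ : GroupSeminorm G}

/-- An element `g` of a group with length function `ℓ` is undistorted if the length of `g ^ n` grows
at least linearly in `n`. In particular, `g` then has infinite order. -/
def IsUndistorted (ℓ : GroupSeminorm G) (g : G) : Prop :=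
  ∃ c > 0, ∀ n : ℕ, n * c ≤ ℓ (g ^ n)

theorem groupSeminorm_pow_le (ℓ : GroupSeminorm G) (g : G) (n : ℕ) : ℓ (g ^ n) ≤ n * ℓ g := by
  induction n with
  | zero => simp
  | succ n ih =>
    calc ℓ (g ^ (n + 1)) ≤ ℓ (g ^ n) + ℓ g := pow_succ g n ▸ map_mul_le_add ℓ _ _
      _ ≤ n * ℓ g + ℓ g := by gcongr
      _ = (n + 1 : ℕ) * ℓ g := by push_cast; ring

theorem groupSeminorm_commutatorElement_le (ℓ : GroupSeminorm G) (g h : G) :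
    ℓ ⁅g, h⁆ ≤ 2 * (ℓ g + ℓ h) := by
  calc ℓ (g * h * g⁻¹ * h⁻¹) ≤ ℓ g + ℓ h + ℓ g⁻¹ + ℓ h⁻¹ := by
        grw [map_mul_le_add, map_mul_le_add, map_mul_le_add]
    _ = 2 * (ℓ g + ℓ h) := by rw [map_inv_eq_map, map_inv_eq_map]; ring

theorem not_isUndistorted_commutatorElement {g h : G} (hg : Commute g ⁅g, h⁆)
    (hh : Commute h ⁅g, h⁆) : ¬ IsUndistorted ℓ ⁅g, h⁆ := by
  rintro ⟨c, hc, hgrowth⟩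
  have hquadratic (n : ℕ) : n * (n * c) ≤ n * (2 * (ℓ g + ℓ h)) :=
    calc (n * (n * c) : ℝ) = (n * n : ℕ) * c := by push_cast; ring
      _ ≤ ℓ ⁅g ^ n, h ^ n⁆ := commutatorElement_pow_pow hg hh n n ▸ hgrowth (n * n)
      _ ≤ 2 * (ℓ (g ^ n) + ℓ (h ^ n)) := groupSeminorm_commutatorElement_le ℓ _ _
      _ ≤ 2 * (n * ℓ g + n * ℓ h) := by grw [groupSeminorm_pow_le, groupSeminorm_pow_le]
      _ = n * (2 * (ℓ g + ℓ h)) := by ring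
  obtain ⟨n, hn⟩ := exists_lt_nsmul hc (2 * (ℓ g + ℓ h))
  rw [nsmul_eq_mul] at hn
  have hbound_nonneg : 0 ≤ 2 * (ℓ g + ℓ h) := by positivity
  have hn_pos : (0 : ℝ) < n := pos_of_mul_pos_left (hbound_nonneg.trans_lt hn) hc.le
  exact hn.not_ge (le_of_mul_le_mul_left (hquadratic n) hn_pos)

theorem commute_of_isUndistorted_commutatorElement [Group.IsNilpotent G]
    (hundistorted : ∀ g h : G, ⁅g, h⁆ ≠ 1 → IsUndistorted ℓ ⁅g, h⁆) (g h : G) : Commute g h := by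
  by_contra hgh
  obtain ⟨x, y, hcenter, hne⟩ := exists_commutatorElement_mem_center_ne_one hgh
  have hcommute (z : G) : Commute z ⁅x, y⁆ := Subgroup.mem_center_iff.mp hcenter z
  exact not_isUndistorted_commutatorElement (hcommute x) (hcommute y) (hundistorted x y hne)

end Undistorted

section Isometry

/-- The displacement of the base point `x`, as a length function on the isometry group. -/
def displacementSeminorm {X : Type*} [PseudoMetricSpace X] (x : X) : GroupSeminorm (X ≃ᵢ X) where
  toFun g := dist (g x) x
  map_one' := dist_self x
  mul_le' g h := by
    calc dist (g (h x)) x ≤ dist (g (h x)) (g x) + dist (g x) x := dist_triangle _ _ _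
      _ = dist (g x) x + dist (h x) x := by rw [g.dist_eq, add_comm]
  inv' g := by
    rw [← g.dist_eq, IsometryEquiv.apply_inv_self, dist_comm]

theorem addRight_pow {E : Type*} [SeminormedAddCommGroup E] (v : E) (n : ℕ) :
    IsometryEquiv.addRight v ^ n = IsometryEquiv.addRight (n • v) := by
  induction n with
  | zero => ext z; simp
  | succ n ih =>
    ext z
    simp only [pow_succ', ih, IsometryEquiv.mul_apply, IsometryEquiv.addRight_apply, succ_nsmul,
      add_assoc]

theorem isUndistorted_addRight {E : Type*} [NormedAddCommGroup E] [NormedSpace ℝ E] {v : E}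
    (hv : v ≠ 0) (x : E) : IsUndistorted (displacementSeminorm x) (IsometryEquiv.addRight v) := by
  refine ⟨‖v‖, norm_pos_iff.mpr hv, fun n => Eq.le ?_⟩
  calc n * ‖v‖ = dist (x + n • v) x := by rw [dist_self_add_left, RCLike.norm_nsmul ℝ, nsmul_eq_mul]
    _ = displacementSeminorm x (IsometryEquiv.addRight v ^ n) := by rw [addRight_pow]; rfl

theorem commutatorElement_eq_addRight {E : Type*} [SeminormedAddCommGroup E] {g h : E ≃ᵢ E}
    {A B : E →+ E} {a b : E} (hg : ∀ z, g z = A z + a) (hh : ∀ z, h z = B z + b)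
    (hAB : ∀ z, A (B z) = B (A z)) :
    ⁅g, h⁆ = IsometryEquiv.addRight (A b + a - (B a + b)) := by
  rw [commutatorElement_def, mul_inv_eq_iff_eq_mul, mul_inv_eq_iff_eq_mul]
  ext z
  simp only [IsometryEquiv.mul_apply, IsometryEquiv.addRight_apply, hg, hh, map_add, hAB]
  abel

end Isometry

theorem nilpotent_affine_unitary_group_abelian_general {E : Type*} [NormedAddCommGroup E]
    [NormedSpace ℝ E] (G : Subgroup (E ≃ᵢ E)) [Group.IsNilpotent G] (T : G → E →+ E) (b : G → E)
    (haff : ∀ (g : G) (z : E), (g : E ≃ᵢ E) z = T g z + b g)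
    (hcomm : ∀ (g h : G) (z : E), T g (T h z) = T h (T g z)) :
    ∀ g h : G, g * h = h * g := by
  refine commute_of_isUndistorted_commutatorElement
    (ℓ := (displacementSeminorm (0 : E)).comp G.subtype) fun g h hne => ?_
  obtain ⟨v, hv⟩ : ∃ v, ((⁅g, h⁆ : G) : E ≃ᵢ E) = IsometryEquiv.addRight v :=
    ⟨_, commutatorElement_eq_addRight (haff g) (haff h) (hcomm g h)⟩
  have hv_ne : v ≠ 0 := by
    rintro rfl
    exact hne (Subtype.ext (hv.trans (IsometryEquiv.ext add_zero)))
  have hundistorted : IsUndistorted (displacementSeminorm 0) ((⁅g, h⁆ : G) : E ≃ᵢ E) :=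
    hv ▸ isUndistorted_addRight hv_ne 0
  exact hundistorted

/-- A nilpotent group of bijective isometries of `ℂ^m` consisting of affine unitary
transformations whose linear parts pairwise commute is commutative. -/
theorem nilpotent_affine_unitary_group_abelian
    (m : ℕ)
    (G : Subgroup (EuclideanSpace ℂ (Fin m) ≃ᵢ EuclideanSpace ℂ (Fin m)))
    [Group.IsNilpotent G]
    (T : G → (EuclideanSpace ℂ (Fin m) ≃ₗᵢ[ℂ] EuclideanSpace ℂ (Fin m)))
    (b : G → EuclideanSpace ℂ (Fin m))
    (haff : ∀ (g : G) (z : EuclideanSpace ℂ (Fin m)),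
      (g : EuclideanSpace ℂ (Fin m) ≃ᵢ EuclideanSpace ℂ (Fin m)) z = T g z + b g)
    (hcomm : ∀ (g h : G) (z : EuclideanSpace ℂ (Fin m)), T g (T h z) = T h (T g z)) :
    ∀ g h : G, g * h = h * g :=
  nilpotent_affine_unitary_group_abelian_general G (fun g => (T g : _ →+ _)) b haff hcomm
end
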